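/- For reals 0 < p < q < 1 and 0 < r < s < 1 with {p,q} ∩ {r,s} = ∅, the extended quarter-circle hooks Q(p,q) and Q(r,s) have nonempty intersection if and only if p < r < q < s or r < p < s < q (i.e., if and only if the intervals (p,q) and (r,s) interleave). -/

import Mathlib

/-- The extended quarter-circle hook
`Q(p,q) = ({p} × [√(1-q²), √(1-p²)]) ∪ ([p, 1] × {√(1-q²)})`. -/
noncomputable def Qhook (p q : ℝ) : Set (ℝ × ℝ) :=
  ({p} : Set ℝ) ×ˢ Set.Icc (Real.sqrt (1 - q ^ 2)) (Real.sqrt (1 - p ^ 2)) ∪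
    Set.Icc p 1 ×ˢ ({Real.sqrt (1 - q ^ 2)} : Set ℝ)

/-- Open intervals `(p,q)` and `(r,s)` interleave. -/
def Interleave (p q r s : ℝ) : Prop :=
  (p < r ∧ r < q ∧ q < s) ∨ (r < p ∧ p < s ∧ s < q)

/-!
A hook below a strictly decreasing curve consists of a vertical and a horizontal leg. Vertical legs
over different points are disjoint, and so are horizontal legs at different heights, so two hooks
can only meet where the vertical leg of one crosses the horizontal leg of the other. The abscissa
and the height of such a crossing give three inequalities, and since the curve reverses order, they
compare the parameters themselves.
-/

section CurveHook

variable {α β : Type*} {f : α → β} {S : Set α} {b p q r s : α}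

/-- The vertical leg of the hook from `(p, f p)` to `(q, f q)`: the segment that joins `(p, f p)`
to the corner `(p, f q)`. -/
def verticalLeg [Preorder β] (f : α → β) (p q : α) : Set (α × β) :=
  {p} ×ˢ Set.Icc (f q) (f p)

/-- The horizontal leg of the hook from `(p, f p)` to `(q, f q)`. It starts at the corner `(p, f q)`
and is extended beyond `(q, f q)` to the line `x = b`. -/
def horizontalLeg [Preorder α] (f : α → β) (b p q : α) : Set (α × β) :=
  Set.Icc p b ×ˢ {f q}

/-- The extended hook joining `(p, f p)` and `(q, f q)` on the graph of a decreasing function `f`.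
The quarter-circle hooks are those with `f x = √(1 - x ^ 2)` and `b = 1`. -/
def curveHook [Preorder α] [Preorder β] (f : α → β) (b p q : α) : Set (α × β) :=
  verticalLeg f p q ∪ horizontalLeg f b p q

lemma disjoint_verticalLeg [Preorder β] (hpr : p ≠ r) :
    Disjoint (verticalLeg f p q) (verticalLeg f r s) :=
  Set.disjoint_prod.mpr (Or.inl (Set.disjoint_singleton.mpr hpr))

lemma disjoint_horizontalLeg [Preorder α] (hqs : f q ≠ f s) :
    Disjoint (horizontalLeg f b p q) (horizontalLeg f b r s) :=
  Set.disjoint_prod.mpr (Or.inr (Set.disjoint_singleton.mpr hqs))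

lemma curveHook_inter_curveHook_nonempty_iff [Preorder α] [Preorder β]
    (hpr : p ≠ r) (hqs : f q ≠ f s) :
    (curveHook f b p q ∩ curveHook f b r s).Nonempty ↔
      (verticalLeg f r s ∩ horizontalLeg f b p q).Nonempty ∨
        (verticalLeg f p q ∩ horizontalLeg f b r s).Nonempty := by
  rw [curveHook, curveHook, Set.union_inter_distrib_right, Set.inter_union_distrib_left,
    Set.inter_union_distrib_left, (disjoint_verticalLeg hpr).inter_eq,
    (disjoint_horizontalLeg hqs).inter_eq, Set.empty_union, Set.union_empty, Set.union_nonempty,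
    or_comm, Set.inter_comm (horizontalLeg f b p q)]

variable [LinearOrder α] [Preorder β]

lemma verticalLeg_inter_horizontalLeg_nonempty_iff (hf : StrictAntiOn f S)
    (hb : b ∈ upperBounds S) (hp : p ∈ S) (hq : q ∈ S) (hs : s ∈ S) :
    (verticalLeg f p q ∩ horizontalLeg f b r s).Nonempty ↔ r ≤ p ∧ p ≤ s ∧ s ≤ q := by
  rw [verticalLeg, horizontalLeg, Set.prod_inter_prod, Set.prod_nonempty_iff,
    Set.singleton_inter_nonempty, Set.inter_singleton_nonempty, Set.mem_Icc, Set.mem_Icc,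
    hf.le_iff_ge hq hs, hf.le_iff_ge hs hp, and_iff_left (hb hp), and_comm (a := s ≤ q)]

theorem qhook_inter_iff_interleave_general (hf : StrictAntiOn f S) (hb : b ∈ upperBounds S)
    (hp : p ∈ S) (hq : q ∈ S) (hr : r ∈ S) (hs : s ∈ S)
    (hdisj : Disjoint ({p, q} : Set α) {r, s}) :
    (curveHook f b p q ∩ curveHook f b r s).Nonempty ↔
      (p < r ∧ r < q ∧ q < s) ∨ (r < p ∧ p < s ∧ s < q) := by
  obtain ⟨⟨hpr, hqr⟩, hps, hqs⟩ : (p ≠ r ∧ q ≠ r) ∧ p ≠ s ∧ q ≠ s := by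
    simpa [eq_comm] using hdisj
  rw [curveHook_inter_curveHook_nonempty_iff hpr (hf.injOn.ne hq hs hqs),
    verticalLeg_inter_horizontalLeg_nonempty_iff hf hb hr hs hq,
    verticalLeg_inter_horizontalLeg_nonempty_iff hf hb hp hq hs,
    hpr.le_iff_lt, hqr.symm.le_iff_lt, hqs.le_iff_lt,
    hpr.symm.le_iff_lt, hps.le_iff_lt, hqs.symm.le_iff_lt]

end CurveHook

lemma strictAntiOn_sqrt_one_sub_sq :
    StrictAntiOn (fun x : ℝ => Real.sqrt (1 - x ^ 2)) (Set.Icc 0 1) := by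
  intro x hx y hy hxy
  have hsq : x ^ 2 < y ^ 2 := pow_lt_pow_left₀ hxy hx.1 two_ne_zero
  have hy_sq : y ^ 2 ≤ 1 := pow_le_one₀ hy.1 hy.2
  exact Real.sqrt_lt_sqrt (sub_nonneg.mpr hy_sq) (sub_lt_sub_left hsq 1)

/-- Two extended quarter-circle hooks with distinct endpoints intersect iff their endpoint
intervals interleave. -/
theorem qhook_inter_iff_interleave (p q r s : ℝ)
    (hp : 0 < p) (hpq : p < q) (hq : q < 1)
    (hr : 0 < r) (hrs : r < s) (hs : s < 1)
    (hdisj : ({p, q} : Set ℝ) ∩ {r, s} = ∅) :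
    (Qhook p q ∩ Qhook r s).Nonempty ↔ Interleave p q r s :=
  qhook_inter_iff_interleave_general strictAntiOn_sqrt_one_sub_sq (fun _ hx => hx.2)
    ⟨hp.le, (hpq.trans hq).le⟩ ⟨(hp.trans hpq).le, hq.le⟩
    ⟨hr.le, (hrs.trans hs).le⟩ ⟨(hr.trans hrs).le, hs.le⟩
    (Set.disjoint_iff_inter_eq_empty.mpr hdisj)
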